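/- arXiv:1406.3062 — 2 statements merged into one kernel-verified Lean document; each statement's English description precedes it below -/
import Mathlib

section
/- Assume CH. Let I be a σ-ideal on ℝ satisfying the standing assumptions (ℝ ∉ I, translation invariance, scale invariance, Borel base, Steinhaus property). Then for every natural number n ≥ 1 there exists an I-Luzin set L ⊆ ℝ such that the n-fold Minkowski sum ⊕ⁿL = L + ⋯ + L (n summands) is an I-Luzin set and the (n+1)-fold Minkowski sum ⊕ⁿ⁺¹L equals ℝ. -/
open Cardinal MeasureTheory Set
open scoped Pointwise

/-- `I` is a σ-ideal on `ℝ`. -/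
def IsSigmaIdeal (I : Set (Set ℝ)) : Prop :=
  ∅ ∈ I ∧ (∀ A B : Set ℝ, A ⊆ B → B ∈ I → A ∈ I) ∧
    ∀ f : ℕ → Set ℝ, (∀ n, f n ∈ I) → (⋃ n, f n) ∈ I

/-- The standing assumptions on the σ-ideal `I`: nontriviality, translation and scale
invariance, Borel base and the Steinhaus property. -/
def StandingIdeal (I : Set (Set ℝ)) : Prop :=
  IsSigmaIdeal I ∧
  Set.univ ∉ I ∧
  (∀ x : ℝ, ∀ S ∈ I, (fun y => x + y) '' S ∈ I) ∧
  (∀ x : ℝ, ∀ S ∈ I, (fun y => x * y) '' S ∈ I) ∧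
  (∀ S ∈ I, ∃ B ∈ I, MeasurableSet B ∧ S ⊆ B) ∧
  (∀ A B : Set ℝ, MeasurableSet A → MeasurableSet B → A ∉ I → B ∉ I →
    (interior (A - B)).Nonempty)

/-- `L` is an `I`-Luzin set. -/
def IsLuzinFor (I : Set (Set ℝ)) (L : Set ℝ) : Prop :=
  Cardinal.mk L = Cardinal.continuum ∧ ∀ S ∈ I, (L ∩ S).Countable

/-- `L` is a strong `I`-Luzin set. -/
def IsStrongLuzinFor (I : Set (Set ℝ)) (L : Set ℝ) : Prop :=
  IsLuzinFor I L ∧ ∀ B : Set ℝ, MeasurableSet B → B ∉ I → ¬ (L ∩ B).Countable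

/-- `L` is a Luzin set. -/
def IsLuzin (L : Set ℝ) : Prop :=
  Cardinal.mk L = Cardinal.continuum ∧ ∀ M : Set ℝ, IsMeagre M → (L ∩ M).Countable

/-- `L` is a strong Luzin set. -/
def IsStrongLuzin (L : Set ℝ) : Prop :=
  IsLuzin L ∧ ∀ B : Set ℝ, MeasurableSet B → ¬ IsMeagre B → ¬ (L ∩ B).Countable

/-- `S` is a Sierpiński set. -/
def IsSierpinski (S : Set ℝ) : Prop :=
  Cardinal.mk S = Cardinal.continuum ∧ ∀ N : Set ℝ, volume N = 0 → (S ∩ N).Countable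

/-- `S` is a strong Sierpiński set. -/
def IsStrongSierpinski (S : Set ℝ) : Prop :=
  IsSierpinski S ∧ ∀ B : Set ℝ, MeasurableSet B → 0 < volume B → ¬ (S ∩ B).Countable

/-- `X` is a Bernstein set. -/
def IsBernstein (X : Set ℝ) : Prop :=
  ∀ P : Set ℝ, Perfect P → P.Nonempty → (P ∩ X).Nonempty ∧ (P ∩ Xᶜ).Nonempty

/-- `A ⊆ ℝ²` is completely `𝓜`-nonmeasurable. -/
def CompletelyMeagerNonmeasurable (A : Set (ℝ × ℝ)) : Prop :=
  ∀ B : Set (ℝ × ℝ), MeasurableSet B → ¬ IsMeagre B → (A ∩ B).Nonempty ∧ ¬ B ⊆ A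

/-- `A ⊆ ℝ²` is completely `𝓝`-nonmeasurable. -/
def CompletelyNullNonmeasurable (A : Set (ℝ × ℝ)) : Prop :=
  ∀ B : Set (ℝ × ℝ), MeasurableSet B → 0 < volume B → (A ∩ B).Nonempty ∧ ¬ B ⊆ A

/-- `n`-fold Minkowski sum (with `nFoldSum A 0 = {0}`). -/
def nFoldSum (A : Set ℝ) : ℕ → Set ℝ
  | 0 => {0}
  | n + 1 => nFoldSum A n + A

open Filter

universe u

/-!
Work with the filter of sets whose complement lies in the ideal: avoiding a set of the ideal is an
eventual condition, and any countably many eventual conditions hold simultaneously at some point.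

Enumerate the line and a base of the ideal in type `ω₁`, and build `L` as an increasing union of
countable sets. At stage `i`, with `C` the countable set built so far and `x` the `i`-th real, add
points `l 0, …, l n` with sum `x` and otherwise generic. This puts `x` into the `(n + 1)`-fold sum.
A new element of the `n`-fold sum has the form `c + ∑ i, m i • l i`, where the multiplicities `m i`
add up to at most `n`, so they cannot be constant unless they vanish. But `∑ i, l i = x` is the
only relation that was imposed, so a nonconstant combination is generic, even after translation
by the countably many possible `c`: it avoids the first `i` sets of the base. Hence each set of
the base meets the `n`-fold sum only in points present at a countable stage.
-/

-- For `A : Set M`, `n • A` is the `n`-fold sum `A + ⋯ + A`, not the dilation `{n • a | a ∈ A}`.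
section Nsmul

variable {M : Type*} [AddMonoid M]

lemma countable_nsmul {A : Set M} (hA : A.Countable) (n : ℕ) : (n • A).Countable := by
  induction n with
  | zero => rw [zero_nsmul]; exact countable_singleton 0
  | succ n ih => rw [succ_nsmul]; exact ih.image2 hA _

lemma nsmul_iUnion_of_directed {ι : Type*} [Nonempty ι] {V : ι → Set M}
    (hV : Directed (· ⊆ ·) V) (n : ℕ) : n • ⋃ i, V i = ⋃ i, n • V i := by
  refine Subset.antisymm ?_ (iUnion_subset fun i => nsmul_subset_nsmul_left (subset_iUnion V i))
  induction n with
  | zero => simp only [zero_nsmul, iUnion_const, subset_rfl]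
  | succ n ih =>
    simp only [succ_nsmul]
    rintro _ ⟨u, hu, v, hv, rfl⟩
    obtain ⟨i, hi⟩ := mem_iUnion.1 (ih hu)
    obtain ⟨j, hj⟩ := mem_iUnion.1 hv
    obtain ⟨k, hik, hjk⟩ := hV i j
    exact mem_iUnion.2 ⟨k, add_mem_add (nsmul_subset_nsmul_left hik hi) (hjk hj)⟩

lemma exists_mapsTo_add_nsmul {L : Set M} (hL : L.Nonempty) {n : ℕ} (hn : n ≠ 0) :
    ∃ c, MapsTo (c + ·) L (n • L) := by
  obtain ⟨a, ha⟩ := hL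
  obtain ⟨k, rfl⟩ := Nat.exists_eq_succ_of_ne_zero hn
  refine ⟨k • a, fun y hy => ?_⟩
  rw [succ_nsmul]
  exact add_mem_add (nsmul_mem_nsmul ha) hy

lemma countable_of_countable_nsmul {M : Type*} [AddLeftCancelMonoid M] {L : Set M} {n : ℕ}
    (hn : n ≠ 0) (h : (n • L).Countable) : L.Countable := by
  obtain rfl | hL := L.eq_empty_or_nonempty
  · exact countable_empty
  obtain ⟨c, hc⟩ := exists_mapsTo_add_nsmul hL hn
  exact hc.countable_of_injOn (add_right_injective c).injOn h

lemma sum_mem_card_nsmul_range {M ι : Type*} [AddCommMonoid M] [Fintype ι] (l : ι → M) :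
    ∑ i, l i ∈ Fintype.card ι • range l := by
  simpa using finsetSum_mem_finsetSum Finset.univ (fun _ => range l) l fun i _ => mem_range_self i

lemma exists_of_mem_nsmul_union_range {M ι : Type*} [AddCommMonoid M] [Fintype ι] {C : Set M}
    {l : ι → M} {n : ℕ} {z : M} (hz : z ∈ n • (C ∪ range l)) :
    ∃ (j : ℕ) (m : ι → ℕ), j + ∑ i, m i = n ∧ ∃ c ∈ j • C, c + ∑ i, m i • l i = z := by
  classical
  induction n generalizing z with
  | zero => exact ⟨0, 0, by simp, z, hz, by simp⟩
  | succ n ih =>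
    rw [succ_nsmul] at hz
    obtain ⟨u, hu, v, hv, rfl⟩ := hz
    obtain ⟨j, m, rfl, c, hc, rfl⟩ := ih hu
    obtain hv | ⟨i, rfl⟩ := hv
    · refine ⟨j + 1, m, by ring, c + v, ?_, add_right_comm _ _ _⟩
      rw [succ_nsmul]
      exact add_mem_add hc hv
    · refine ⟨j, m + Pi.single i 1, ?_, c, hc, ?_⟩
      · simp [Finset.sum_add_distrib, add_assoc]
      · simp [Finset.sum_add_distrib, add_smul, add_assoc, Pi.single_apply]

end Nsmul

section Generic

variable {G : Type*} [AddCommGroup G] {F : Filter G}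

/-- Invariance of a filter under the maps `y ↦ a • y + c` with `a` a nonzero integer. For the
filter dual to an ideal on `ℝ`, this is the part of translation and scale invariance that the
construction of generic points relies on. -/
def IsIntAffineInvariant (F : Filter G) : Prop :=
  ∀ a : ℤ, a ≠ 0 → ∀ c : G, Tendsto (fun y => a • y + c) F F

lemma IsIntAffineInvariant.eventually_add_mem (hF : IsIntAffineInvariant F) {T : Set G}
    (hT : T ∈ F) (c : G) : ∀ᶠ y in F, y + c ∈ T := by
  have h := hF 1 one_ne_zero c
  simp only [one_zsmul] at h
  exact h hT

lemma countable_sdiff_of_countable_nsmul_sdiff (hF : IsIntAffineInvariant F) {L : Set G} {n : ℕ}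
    (hn : n ≠ 0) (h : ∀ T ∈ F, (n • L \ T).Countable) {T : Set G} (hT : T ∈ F) :
    (L \ T).Countable := by
  obtain rfl | hL := L.eq_empty_or_nonempty
  · simp only [empty_sdiff, countable_empty]
  obtain ⟨c, hc⟩ := exists_mapsTo_add_nsmul hL hn
  have hshift : {y | y + -c ∈ T} ∈ F := hF.eventually_add_mem hT (-c)
  have hmaps : MapsTo (c + ·) (L \ T) (n • L \ {y | y + -c ∈ T}) := fun y hy =>
    ⟨hc hy.1, by simpa only [mem_ofPred_eq, add_neg_cancel_comm] using hy.2⟩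
  exact hmaps.countable_of_injOn (add_right_injective c).injOn (h _ hshift)

lemma exists_forall_sum_zsmul_mem [F.NeBot] [CountableInterFilter F]
    (hF : IsIntAffineInvariant F) {T : Set G} (hT : T ∈ F) (n : ℕ) :
    ∃ l : Fin n → G, ∀ k : Fin n → ℤ, k ≠ 0 → ∑ i, k i • l i ∈ T := by
  induction n with
  | zero => exact ⟨0, fun k hk => (hk (Subsingleton.elim _ _)).elim⟩
  | succ n ih =>
    obtain ⟨l, hl⟩ := ih
    have hgeneric : ∀ᶠ y in F, ∀ (a : {a : ℤ // a ≠ 0}) (k : Fin n → ℤ),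
        a.1 • y + ∑ i, k i • l i ∈ T := by
      simp only [eventually_countable_forall]
      exact fun a k => hF a a.2 _ hT
    obtain ⟨y, hy⟩ := hgeneric.exists
    refine ⟨Fin.cons y l, fun k hk => ?_⟩
    simp only [Fin.sum_univ_succ, Fin.cons_zero, Fin.cons_succ]
    by_cases hk₀ : k 0 = 0
    · rw [hk₀, zero_smul, zero_add]
      exact hl (Fin.tail k) fun h => hk (funext (Fin.cases hk₀ (congrFun h)))
    · exact hy ⟨k 0, hk₀⟩ (Fin.tail k)

lemma exists_sum_eq_forall_sum_zsmul_mem [F.NeBot] [CountableInterFilter F]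
    (hF : IsIntAffineInvariant F) {T : Set G} (hT : T ∈ F) (n : ℕ) (x : G) :
    ∃ l : Fin (n + 1) → G, ∑ i, l i = x ∧
      ∀ m : Fin (n + 1) → ℤ, (¬ ∀ i, m i = m 0) → ∑ i, m i • l i ∈ T := by
  have hshift : ∀ᶠ y in F, ∀ a : ℤ, y + a • x ∈ T :=
    eventually_countable_forall.2 fun a => hF.eventually_add_mem hT (a • x)
  obtain ⟨l, hl⟩ := exists_forall_sum_zsmul_mem hF hshift n
  refine ⟨Fin.cons (x - ∑ i, l i) l, by simp [Fin.sum_univ_succ], fun m hm => ?_⟩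
  have hsum : ∑ i, m i • (Fin.cons (x - ∑ i, l i) l : Fin (n + 1) → G) i =
      ∑ i : Fin n, (m i.succ - m 0) • l i + m 0 • x := by
    simp only [Fin.sum_univ_succ, Fin.cons_zero, Fin.cons_succ, sub_smul, smul_sub,
      Finset.sum_sub_distrib, ← Finset.smul_sum]
    abel
  rw [hsum]
  refine hl (fun i => m i.succ - m 0) (fun h => hm ?_) (m 0)
  exact Fin.cases rfl fun i => sub_eq_zero.1 (congrFun h i)

lemma exists_finite_nsmul_union_subset [F.NeBot] [CountableInterFilter F]
    (hF : IsIntAffineInvariant F) {C : Set G} (hC : C.Countable) {T : Set G} (hT : T ∈ F)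
    (n : ℕ) (x : G) :
    ∃ D : Set G, D.Finite ∧ x ∈ (n + 1) • D ∧ n • (C ∪ D) ⊆ n • C ∪ T := by
  have hshift : ∀ᶠ y in F, ∀ j : ℕ, ∀ c ∈ j • C, y + c ∈ T := by
    refine eventually_countable_forall.2 fun j => ?_
    exact (eventually_countable_ball (countable_nsmul hC j)).2 fun c _ => hF.eventually_add_mem hT c
  obtain ⟨l, hlx, hl⟩ := exists_sum_eq_forall_sum_zsmul_mem hF hshift n x
  refine ⟨range l, finite_range l, ?_, fun z hz => ?_⟩
  · simpa [hlx] using sum_mem_card_nsmul_range l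
  obtain ⟨j, m, hjm, c, hc, rfl⟩ := exists_of_mem_nsmul_union_range hz
  by_cases hconst : ∀ i, m i = m 0
  · have hcard : j + (n + 1) * m 0 = n := by simpa [hconst] using hjm
    have hm₀ : m 0 = 0 := by
      by_contra h
      nlinarith [Nat.pos_of_ne_zero h]
    obtain rfl : j = n := by simpa [hm₀] using hcard
    left
    simpa [hconst, hm₀] using hc
  · right
    rw [add_comm]
    simpa using hl (fun i => m i) (by exact_mod_cast hconst) j c hc

end Generic

lemma accumulate_eq_biUnion_lt_union {α ι : Type*} [PartialOrder ι] (P : ι → Set α) (i : ι) :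
    accumulate P i = (⋃ j < i, P j) ∪ P i := by
  ext z
  simp [mem_accumulate, le_iff_lt_or_eq, or_and_right, exists_or]

section Recursion

variable {ι : Type*} [LinearOrder ι]

lemma exists_countable_family_forall_rel {α : Type*} [WellFoundedLT ι]
    (hι : ∀ i : ι, (Iio i).Countable) {R : ι → Set α → Set α → Prop}
    (hR : ∀ i (C : Set α), C.Countable → ∃ D : Set α, D.Countable ∧ R i C D) :
    ∃ P : ι → Set α, (∀ i, (P i).Countable) ∧ ∀ i, R i (⋃ j < i, P j) (P i) := by
  choose D hDc hD using hR
  let next (i : ι) (P : ∀ j, j < i → {A : Set α // A.Countable}) : {A : Set α // A.Countable} :=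
    have hC : (⋃ (j) (hj : j < i), (P j hj).1).Countable :=
      (hι i).biUnion fun j hj => (P j hj).2
    ⟨D i _ hC, hDc i _ hC⟩
  let P : ι → {A : Set α // A.Countable} := wellFounded_lt.fix next
  have hP (i : ι) : P i = next i fun j _ => P j := wellFounded_lt.fix_eq next i
  refine ⟨fun i => (P i).1, fun i => (P i).2, fun i => ?_⟩
  change R i (⋃ j < i, (P j).1) (P i).1
  rw [hP i]
  exact hD i _ _

lemma nsmul_iUnion_subset_nsmul_accumulate_union {M : Type*} [AddMonoid M] [WellFoundedLT ι]
    {P T : ι → Set M} {n : ℕ}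
    (h : ∀ i, n • accumulate P i ⊆ n • (⋃ j < i, P j) ∪ ⋂ j < i, T j) (b : ι) :
    n • ⋃ i, P i ⊆ n • accumulate P b ∪ T b := by
  have : Nonempty ι := ⟨b⟩
  rw [← iUnion_accumulate, nsmul_iUnion_of_directed monotone_accumulate.directed_le]
  refine iUnion_subset fun a => ?_
  induction a using WellFoundedLT.induction with
  | ind a ih =>
    obtain hab | hba := le_or_gt a b
    · exact subset_union_of_subset_left (nsmul_subset_nsmul_left (monotone_accumulate hab)) _
    have : Nonempty (Iio a) := ⟨⟨b, hba⟩⟩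
    have hbelow : ⋃ j < a, P j ⊆ ⋃ j : Iio a, accumulate P j :=
      iUnion₂_subset fun j hj => subset_accumulate.trans
        (subset_iUnion (fun j : Iio a => accumulate P j) ⟨j, hj⟩)
    have hdir : Directed (· ⊆ ·) fun j : Iio a => accumulate P j :=
      (monotone_accumulate.comp (Subtype.mono_coe _)).directed_le
    calc n • accumulate P a ⊆ n • (⋃ j < a, P j) ∪ ⋂ j < a, T j := h a
      _ ⊆ (⋃ j : Iio a, n • accumulate P j) ∪ T b := by
        rw [← nsmul_iUnion_of_directed hdir]
        exact union_subset_union (nsmul_subset_nsmul_left hbelow) (biInter_subset_of_mem hba)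
      _ ⊆ n • accumulate P b ∪ T b :=
        union_subset (iUnion_subset fun j => ih j j.2) subset_union_right

end Recursion

lemma countable_Iio_toType_omega_one (i : (Ordinal.omega 1).ToType) : (Iio i).Countable := by
  rw [← le_aleph0_iff_set_countable, ← Order.lt_succ_iff, succ_aleph0]
  simpa using mk_Iio_lt i (by simp)

section AlephOne

variable {G : Type*} [AddCommGroup G] {F : Filter G} [F.NeBot] [CountableInterFilter F]

theorem exists_forall_mem_nsmul_forall_countable_sdiff
    (hF : IsIntAffineInvariant F) {ι : Type*} [LinearOrder ι] [WellFoundedLT ι]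
    (hι : ∀ i : ι, (Iio i).Countable) {T : ι → Set G} (hT : ∀ i, T i ∈ F) (x : ι → G) (n : ℕ) :
    ∃ L : Set G, (∀ i, x i ∈ (n + 1) • L) ∧ ∀ i, (n • L \ T i).Countable := by
  obtain ⟨P, hPc, hP⟩ := exists_countable_family_forall_rel hι
    (R := fun i C D => x i ∈ (n + 1) • D ∧ n • (C ∪ D) ⊆ n • C ∪ ⋂ j < i, T j) fun i C hC => by
      have hTi : ⋂ j < i, T j ∈ F := (countable_bInter_mem (hι i)).2 fun j _ => hT j
      obtain ⟨D, hD, hDi⟩ := exists_finite_nsmul_union_subset hF hC hTi n (x i)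
      exact ⟨D, hD.countable, hDi⟩
  refine ⟨⋃ i, P i, fun i => nsmul_subset_nsmul_left (subset_iUnion P i) (hP i).1, fun b => ?_⟩
  have hacc : (accumulate P b).Countable := by
    rw [accumulate_eq_biUnion_lt_union]
    exact ((hι b).biUnion fun j _ => hPc j).union (hPc b)
  refine (countable_nsmul hacc n).mono (sdiff_subset_iff.2 ?_)
  rw [union_comm]
  refine nsmul_iUnion_subset_nsmul_accumulate_union (fun i => ?_) b
  rw [accumulate_eq_biUnion_lt_union]
  exact (hP i).2

theorem exists_nsmul_eq_univ_forall_countable_sdiff (hF : IsIntAffineInvariant F) (hG : #G = ℵ₁)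
    {B : G → Set G} (hB : F.HasBasis (fun _ => True) B) (n : ℕ) :
    ∃ L : Set G, (n + 1) • L = Set.univ ∧ ∀ T ∈ F, (n • L \ T).Countable := by
  obtain ⟨e⟩ : Nonempty ((Ordinal.omega 1).ToType ≃ G) := Cardinal.eq.1 (by simp [hG])
  obtain ⟨L, hmem, hdiff⟩ := exists_forall_mem_nsmul_forall_countable_sdiff hF
    countable_Iio_toType_omega_one (fun i => hB.mem_of_mem (i := e i) trivial) e n
  refine ⟨L, eq_univ_of_forall (e.surjective.forall.2 hmem), fun T hT => ?_⟩
  obtain ⟨y, -, hy⟩ := hB.mem_iff.1 hT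
  obtain ⟨i, rfl⟩ := e.surjective y
  exact (hdiff i).mono (sdiff_subset_sdiff_right hy)

end AlephOne

lemma exists_hasBasis_of_continuum_le {α ι : Type u} [MeasurableSpace α]
    [MeasurableSpace.CountablyGenerated α] (F : Filter α) [F.IsMeasurablyGenerated]
    (hι : 𝔠 ≤ #ι) : ∃ B : ι → Set α, F.HasBasis (fun _ => True) B := by
  obtain ⟨b, hb, hgen⟩ := MeasurableSpace.CountablyGenerated.isCountablyGenerated (α := α)
  have hmeas : #{s : Set α | MeasurableSet s} ≤ 𝔠 := by
    rw [hgen]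
    exact MeasurableSpace.cardinal_measurableSet_le_continuum
      (hb.le_aleph0.trans aleph0_le_continuum)
  let M := {s : Set α // MeasurableSet s ∧ s ∈ F}
  have : Nonempty M := ⟨⟨Set.univ, .univ, univ_mem⟩⟩
  have hcard : #M ≤ #ι := ((mk_subtype_mono fun _ hs => hs.1).trans hmeas).trans hι
  obtain ⟨g⟩ := hcard
  obtain ⟨f, hf⟩ : ∃ f : ι → M, Function.Surjective f :=
    ⟨_, Function.invFun_surjective g.injective⟩
  refine ⟨fun i => (f i).1,
    ⟨fun t => ⟨fun ht => ?_, fun ⟨i, _, hi⟩ => mem_of_superset (f i).2.2 hi⟩⟩⟩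
  obtain ⟨s, hsF, hs, hst⟩ := IsMeasurablyGenerated.exists_measurable_subset ht
  obtain ⟨i, hi⟩ := hf ⟨s, hs, hsF⟩
  exact ⟨i, trivial, by rwa [hi]⟩

namespace IsSigmaIdeal

lemma sUnion_mem {I : Set (Set ℝ)} (hI : IsSigmaIdeal I) {𝒮 : Set (Set ℝ)} (h𝒮 : 𝒮.Countable)
    (h : ∀ S ∈ 𝒮, S ∈ I) : ⋃₀ 𝒮 ∈ I := by
  obtain rfl | hne := 𝒮.eq_empty_or_nonempty
  · simpa only [sUnion_empty] using hI.1
  · obtain ⟨f, rfl⟩ := h𝒮.exists_eq_range hne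
    exact hI.2.2 f fun n => h _ (mem_range_self n)

/-- The filter of sets whose complement lies in a σ-ideal: `∀ᶠ y in hI.dualFilter, p y` says
that `p` fails only on a set of the ideal. -/
def dualFilter {I : Set (Set ℝ)} (hI : IsSigmaIdeal I) : Filter ℝ :=
  Filter.ofCountableUnion I (fun _ => hI.sUnion_mem) fun t ht s hst => hI.2.1 s t hst ht

variable {I : Set (Set ℝ)} {hI : IsSigmaIdeal I}

lemma mem_dualFilter {S : Set ℝ} : S ∈ hI.dualFilter ↔ Sᶜ ∈ I := mem_ofCountableUnion

instance : CountableInterFilter hI.dualFilter := countableInter_ofCountableUnion ..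

lemma neBot_dualFilter (h : Set.univ ∉ I) : hI.dualFilter.NeBot :=
  neBot_iff.2 <| by rwa [Ne, ← empty_mem_iff_bot, mem_dualFilter, compl_empty]

lemma isMeasurablyGenerated_dualFilter (h : ∀ S ∈ I, ∃ B ∈ I, MeasurableSet B ∧ S ⊆ B) :
    hI.dualFilter.IsMeasurablyGenerated where
  exists_measurable_subset S hS := by
    obtain ⟨B, hBI, hB, hSB⟩ := h _ (mem_dualFilter.1 hS)
    exact ⟨Bᶜ, mem_dualFilter.2 (by rwa [compl_compl]), hB.compl, compl_subset_comm.1 hSB⟩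

lemma isIntAffineInvariant_dualFilter
    (htrans : ∀ x : ℝ, ∀ S ∈ I, (fun y => x + y) '' S ∈ I)
    (hscale : ∀ x : ℝ, ∀ S ∈ I, (fun y => x * y) '' S ∈ I) :
    IsIntAffineInvariant hI.dualFilter := by
  intro a ha c T hT
  have hS := hscale (a : ℝ)⁻¹ _ (htrans (-c) _ (mem_dualFilter.1 hT))
  refine mem_map.2 (mem_dualFilter.2 (hI.2.1 _ _ (fun y hy => ?_) hS))
  exact ⟨a * y, ⟨a * y + c, by simpa using hy, by simp⟩, by simp [ha]⟩

end IsSigmaIdeal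

lemma nFoldSum_eq_nsmul (A : Set ℝ) (n : ℕ) : nFoldSum A n = n • A := by
  induction n with
  | zero => rw [zero_nsmul]; rfl
  | succ n ih => rw [succ_nsmul, ← ih]; rfl

lemma mk_real_eq_aleph_one (hCH : Cardinal.continuum.{u} = ℵ₁) : #ℝ = ℵ₁ := by
  rw [mk_real]
  apply lift_injective.{u}
  rwa [lift_continuum, lift_aleph, Ordinal.lift_one]

lemma isLuzinFor_of_not_countable (hℝ : #ℝ = ℵ₁) {I : Set (Set ℝ)} (hI : IsSigmaIdeal I)
    {A : Set ℝ} (hA : ¬ A.Countable) (h : ∀ T ∈ hI.dualFilter, (A \ T).Countable) :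
    IsLuzinFor I A := by
  refine ⟨le_antisymm ((mk_set_le A).trans_eq mk_real) ?_, fun S hS => ?_⟩
  · rwa [← mk_real, hℝ, ← succ_aleph0, Order.succ_le_iff, ← not_le, le_aleph0_iff_set_countable]
  · simpa only [sdiff_compl] using h Sᶜ (IsSigmaIdeal.mem_dualFilter.2 (by rwa [compl_compl]))

theorem stmt_13_general (hCH : 𝔠 = ℵ₁) {I : Set (Set ℝ)} (hI : IsSigmaIdeal I)
    (huniv : Set.univ ∉ I)
    (htrans : ∀ x : ℝ, ∀ S ∈ I, (fun y => x + y) '' S ∈ I)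
    (hscale : ∀ x : ℝ, ∀ S ∈ I, (fun y => x * y) '' S ∈ I)
    (hborel : ∀ S ∈ I, ∃ B ∈ I, MeasurableSet B ∧ S ⊆ B) {n : ℕ} (hn : 1 ≤ n) :
    ∃ L : Set ℝ, IsLuzinFor I L ∧
      IsLuzinFor I (nFoldSum L n) ∧ nFoldSum L (n + 1) = Set.univ := by
  have hℝ : #ℝ = ℵ₁ := mk_real_eq_aleph_one hCH
  have := hI.neBot_dualFilter huniv
  have := hI.isMeasurablyGenerated_dualFilter hborel
  have hF := hI.isIntAffineInvariant_dualFilter htrans hscale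
  obtain ⟨B, hB⟩ := exists_hasBasis_of_continuum_le hI.dualFilter mk_real.ge
  obtain ⟨L, hfull, hdiff⟩ := exists_nsmul_eq_univ_forall_countable_sdiff hF hℝ hB n
  have hunc : ¬ L.Countable := fun h =>
    not_countable_univ (hfull ▸ countable_nsmul h (n + 1))
  simp only [nFoldSum_eq_nsmul]
  refine ⟨L, isLuzinFor_of_not_countable hℝ hI hunc fun T hT => ?_,
    isLuzinFor_of_not_countable hℝ hI ?_ hdiff, hfull⟩
  · exact countable_sdiff_of_countable_nsmul_sdiff hF (by omega) hdiff hT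
  · exact fun h => hunc (countable_of_countable_nsmul (by omega) h)

theorem stmt_13 (hCH : Cardinal.continuum = Cardinal.aleph 1)
    (I : Set (Set ℝ)) (hI : StandingIdeal I) :
    ∀ n : ℕ, 1 ≤ n → ∃ L : Set ℝ, IsLuzinFor I L ∧
      IsLuzinFor I (nFoldSum L n) ∧ nFoldSum L (n + 1) = Set.univ := by
  obtain ⟨hσ, huniv, htrans, hscale, hborel, -⟩ := hI
  exact fun n hn => stmt_13_general hCH hσ huniv htrans hscale hborel hn
end

section
/- Assume CH. Then there exists a Sierpiński set S ⊆ ℝ such that the Minkowski sum S + S is a Bernstein set. -/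
/-!
Under CH, list in order type `ω₁` all pairs of a conull Borel set `A` and an uncountable Borel
set `P`. At each stage only countably many points have been put into `S` and countably many points
omitted from `S + S`. Fix `p ∈ P` that is not omitted. For almost every `x`, both `x` and `p - x`
lie in all the conull sets listed so far and neither produces an omitted sum, so both can be put
into `S`, whence `p ∈ S + S`; then a point of `P` outside the still countable sumset is omitted.
Points added from stage `A` on lie in `A`, so `S \ A` is countable. The doubles `x + x` are harmless
because the fibres of `x ↦ x + x` are disjoint, so only countably many of them are not null, and
their values are never omitted. Finally `S` is uncountable, for otherwise the complement of `S + S`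
would be an uncountable Borel set, which has to meet `S + S`.
-/

open Cardinal MeasureTheory Set
open scoped Pointwise

universe u v

/-- One step of the construction: `left` and `right` are put into the set `S` under construction,
and `omitted` is to be kept out of `S + S`. -/
structure Stage (G : Type*) where
  left : G
  right : G
  omitted : G

namespace Stage

variable {G : Type*}

/-- The part of the set `S` under construction that the stages in `C` contribute. -/
def summands (C : Set (Stage G)) : Set G := left '' C ∪ right '' C

/-- The families of stages none of whose omitted points is a sum of two of their summands. -/
def consistent (G : Type*) [Add G] : Set (Set (Stage G)) :=
  {C | Disjoint (summands C + summands C) (omitted '' C)}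

lemma left_mem_summands {C : Set (Stage G)} {v : Stage G} (hv : v ∈ C) : v.left ∈ summands C :=
  Or.inl (mem_image_of_mem _ hv)

lemma right_mem_summands {C : Set (Stage G)} {v : Stage G} (hv : v ∈ C) : v.right ∈ summands C :=
  Or.inr (mem_image_of_mem _ hv)

lemma mem_summands {C : Set (Stage G)} {s : G} :
    s ∈ summands C ↔ ∃ v ∈ C, s = v.left ∨ s = v.right := by
  simp only [summands, mem_union, mem_image, ← exists_or, ← and_or_left, eq_comm]

lemma summands_mono {C C' : Set (Stage G)} (h : C ⊆ C') : summands C ⊆ summands C' :=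
  union_subset_union (image_mono h) (image_mono h)

lemma summands_insert (v : Stage G) (C : Set (Stage G)) :
    summands (insert v C) = {v.left, v.right} ∪ summands C := by
  simp only [summands, image_insert_eq]
  grind

lemma countable_summands {C : Set (Stage G)} (hC : C.Countable) : (summands C).Countable :=
  (hC.image _).union (hC.image _)

lemma countable_summands_range_sdiff {ι : Type*} [LinearOrder ι] {i : ι} (hi : (Iio i).Countable)
    {f : ι → Stage G} {A : Set G} (hf : ∀ j, i ≤ j → (f j).left ∈ A ∧ (f j).right ∈ A) :
    (summands (range f) \ A).Countable := by
  refine (countable_summands (hi.image f)).mono ?_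
  rintro s ⟨hs, hsA⟩
  obtain ⟨_, ⟨j, rfl⟩, hsj⟩ := mem_summands.1 hs
  have hji : j < i := by
    by_contra! hij
    obtain rfl | rfl := hsj
    · exact hsA (hf j hij).1
    · exact hsA (hf j hij).2
  exact mem_summands.2 ⟨f j, mem_image_of_mem f hji, hsj⟩

variable [Add G]

lemma isOfFiniteCharacter_consistent : Order.IsOfFiniteCharacter (consistent G) := by
  refine fun C ↦ ⟨fun hC C' hC' _ ↦ ?_, fun hfin ↦ ?_⟩
  · exact hC.mono (add_subset_add (summands_mono hC') (summands_mono hC')) (image_mono hC')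
  · refine disjoint_left.2 ?_
    rintro _ ⟨s, hs, t, ht, rfl⟩ ⟨w, hw, hst⟩
    obtain ⟨u, hu, hsu⟩ := mem_summands.1 hs
    obtain ⟨v, hv, htv⟩ := mem_summands.1 ht
    have huvw : {u, v, w} ∈ consistent G := hfin _ (by grind) (toFinite _)
    exact disjoint_left.1 huvw
      (add_mem_add (mem_summands.2 ⟨u, by simp, hsu⟩) (mem_summands.2 ⟨v, by simp, htv⟩))
      ⟨w, by simp, hst⟩

lemma empty_mem_consistent : ∅ ∈ consistent G := by
  simp [consistent]

end Stage

section Recursion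

variable {ι V : Type*} [LinearOrder ι] {F : Set (Set V)}

lemma image_mem_of_forall_image_Iic_mem (hF : Order.IsOfFiniteCharacter F) (hempty : ∅ ∈ F)
    {f : ι → V} {s : Set ι} (h : ∀ i ∈ s, f '' Iic i ∈ F) : f '' s ∈ F := by
  refine (hF _).2 fun y hys hy ↦ ?_
  obtain ⟨t, hts, ht, rfl⟩ := exists_subset_image_finite_and.1 ⟨y, hys, hy, rfl⟩
  obtain rfl | hne := t.eq_empty_or_nonempty
  · rwa [image_empty]
  · obtain ⟨m, hmt, hm⟩ := exists_max_image t id ht hne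
    exact (hF _).1 (h m (hts hmt)) _ (image_mono hm) hy

theorem exists_range_mem_of_isOfFiniteCharacter [WellFoundedLT ι]
    (hF : Order.IsOfFiniteCharacter F) (hempty : ∅ ∈ F) (R : ι → V → Prop)
    (hstep : ∀ (i : ι) (g : Iio i → V), (∀ j : Iio i, R j (g j)) → range g ∈ F →
      ∃ v, R i v ∧ insert v (range g) ∈ F) :
    ∃ f : ι → V, range f ∈ F ∧ ∀ i, R i (f i) := by
  have hstep' (i : ι) (g : Iio i → V) : ∃ v, (∀ j : Iio i, R j (g j)) → range g ∈ F →
      R i v ∧ insert v (range g) ∈ F := by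
    by_cases hg : (∀ j : Iio i, R j (g j)) ∧ range g ∈ F
    · obtain ⟨v, hv⟩ := hstep i g hg.1 hg.2
      exact ⟨v, fun _ _ ↦ hv⟩
    · obtain hrange | ⟨v, -⟩ := (range g).eq_empty_or_nonempty
      · have := range_eq_empty_iff.1 hrange
        exact absurd ⟨fun j ↦ isEmptyElim j, hrange ▸ hempty⟩ hg
      · exact ⟨v, fun h₁ h₂ ↦ absurd ⟨h₁, h₂⟩ hg⟩
  choose next hnext using hstep'
  let f : ι → V := WellFoundedLT.fix fun i g ↦ next i fun j : Iio i ↦ g j j.2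
  have hf (i : ι) : f i = next i fun j : Iio i ↦ f j := WellFoundedLT.fix_eq _ i
  have hgood (i : ι) : R i (f i) ∧ f '' Iic i ∈ F := by
    induction i using WellFoundedLT.induction with
    | ind i ih =>
      have hIio : f '' Iio i ∈ F :=
        image_mem_of_forall_image_Iic_mem hF hempty fun j hj ↦ (ih j hj).2
      rw [← Iio_insert, image_insert_eq]
      rw [image_eq_range] at hIio ⊢
      rw [hf i]
      exact hnext i _ (fun j ↦ (ih j j.2).1) hIio
  refine ⟨f, ?_, fun i ↦ (hgood i).1⟩
  rw [← image_univ]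
  exact image_mem_of_forall_image_Iic_mem hF hempty fun i _ ↦ (hgood i).2

end Recursion

section AlmostAll

open Filter

lemma eventually_notMem_of_countable {α : Type*} {l : Filter α} [CountableInterFilter l]
    (hl : l ≤ cofinite) {s : Set α} (hs : s.Countable) : ∀ᶠ x in l, x ∉ s := by
  have hne : ∀ᶠ x in l, ∀ y ∈ s, x ≠ y :=
    (eventually_countable_ball hs).2 fun y _ ↦ le_cofinite_iff_eventually_ne.1 hl y
  exact hne.mono fun x hx hxs ↦ hx x hxs rfl

lemma not_countable_univ_of_le_cofinite {α : Type*} {l : Filter α} [CountableInterFilter l]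
    [NeBot l] (hl : l ≤ cofinite) : ¬ (univ : Set α).Countable := fun h ↦
  have ⟨x, hx⟩ := (eventually_notMem_of_countable hl h).exists
  hx (mem_univ x)

variable {G : Type*} [AddCommGroup G] {l : Filter G} [CountableInterFilter l]

lemma eventually_forall_insert_self_add_notMem (hl : l ≤ cofinite) {S D : Set G}
    (hS : S.Countable) (hD : D.Countable) (hdouble : ∀ d ∈ D, ∀ᶠ x in l, x + x ≠ d) :
    ∀ᶠ x in l, ∀ s ∈ insert x S, x + s ∉ D := by
  have hself : ∀ᶠ x in l, ∀ d ∈ D, x + x ≠ d := (eventually_countable_ball hD).2 hdouble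
  filter_upwards [hself, eventually_notMem_of_countable hl (hD.image2 hS (· - ·))] with x hxx hxS
  rintro s (rfl | hs) hsD
  · exact hxx _ hsD rfl
  · exact hxS ⟨x + s, hsD, s, hs, add_sub_cancel_right x s⟩

variable [NeBot l]

lemma exists_add_mem_and_disjoint_add (hl : l ≤ cofinite)
    (hsub : ∀ p : G, Tendsto (p - ·) l l) {S D A P : Set G} (hS : S.Countable) (hD : D.Countable)
    (hSD : Disjoint (S + S) D) (hdouble : ∀ d ∈ D, ∀ᶠ x in l, x + x ≠ d) (hA : A ∈ l)
    (hP : ¬ P.Countable) :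
    ∃ x ∈ A, ∃ y ∈ A, x + y ∈ P ∧ Disjoint (({x, y} ∪ S) + ({x, y} ∪ S)) D := by
  obtain ⟨p, hpP, hpD⟩ : (P \ D).Nonempty := sdiff_nonempty.2 fun h ↦ hP (hD.mono h)
  have hgood : ∀ᶠ x in l, x ∈ A ∧ ∀ s ∈ insert x S, x + s ∉ D :=
    Eventually.and hA (eventually_forall_insert_self_add_notMem hl hS hD hdouble)
  obtain ⟨x, ⟨hxA, hx⟩, hyA, hy⟩ := (hgood.and ((hsub p).eventually hgood)).exists
  set y := p - x
  have hxy : x + y = p := add_sub_cancel x p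
  rw [← hxy] at hpP hpD
  have hSS (s) (hs : s ∈ S) (t) (ht : t ∈ S) : s + t ∉ D := disjoint_left.1 hSD (add_mem_add hs ht)
  refine ⟨x, hxA, y, hyA, hpP, disjoint_left.2 ?_⟩
  rintro _ ⟨s, hs, t, ht, rfl⟩
  grind [add_comm]

lemma exists_insert_mem_consistent (hl : l ≤ cofinite) (hsub : ∀ p : G, Tendsto (p - ·) l l)
    {C : Set (Stage G)} (hC : C.Countable) (hCcons : C ∈ Stage.consistent G)
    (hdouble : ∀ v ∈ C, ∀ᶠ x in l, x + x ≠ v.omitted) {A P : Set G} (hA : A ∈ l)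
    (hP : ¬ P.Countable) :
    ∃ v : Stage G, (v.left ∈ A ∧ v.right ∈ A) ∧ (v.left + v.right ∈ P ∧ v.omitted ∈ P) ∧
      insert v C ∈ Stage.consistent G := by
  obtain ⟨x, hx, y, hy, hxy, hdisj⟩ := exists_add_mem_and_disjoint_add hl hsub
    (Stage.countable_summands hC) (hC.image Stage.omitted) hCcons (forall_mem_image.2 hdouble) hA hP
  set T := {x, y} ∪ Stage.summands C
  have hT : T.Countable := (toFinite {x, y}).countable.union (Stage.countable_summands hC)
  obtain ⟨d, hdP, hd⟩ : (P \ (T + T)).Nonempty :=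
    sdiff_nonempty.2 fun h ↦ hP ((hT.image2 hT (· + ·)).mono h)
  refine ⟨⟨x, y, d⟩, ⟨hx, hy⟩, ⟨hxy, hdP⟩, ?_⟩
  simpa only [Stage.consistent, mem_ofPred_eq, Stage.summands_insert, image_insert_eq,
    disjoint_insert_right] using ⟨hd, hdisj⟩

theorem exists_countable_sdiff_and_add_self_inter (hl : l ≤ cofinite)
    (hsub : ∀ p : G, Tendsto (p - ·) l l) {ι : Type*} (hι : #ι ≤ ℵ₁) {A P : ι → Set G}
    (hA : ∀ i, A i ∈ l) (hP : ∀ i, ¬ (P i).Countable)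
    (hdouble : ∀ i, ∀ d ∈ P i, ∀ᶠ x in l, x + x ≠ d) :
    ∃ S : Set G, (∀ i, (S \ A i).Countable) ∧
      ∀ i, (P i ∩ (S + S)).Nonempty ∧ (P i ∩ (S + S)ᶜ).Nonempty := by
  obtain ⟨_, _, hord⟩ := exists_ord_eq_type_lt ι
  have hIio (i : ι) : (Iio i).Countable :=
    le_aleph0_iff_set_countable.1 (lt_aleph_one_iff.1 ((mk_Iio_lt i hord).trans_le hι))
  have hIic (i : ι) : ⋂ j ∈ Iic i, A j ∈ l :=
    (countable_bInter_mem (Iio_insert (a := i) ▸ (hIio i).insert i)).2 fun j _ ↦ hA j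
  let R (i : ι) (v : Stage G) : Prop :=
    (v.left ∈ ⋂ j ∈ Iic i, A j ∧ v.right ∈ ⋂ j ∈ Iic i, A j) ∧
      (v.left + v.right ∈ P i ∧ v.omitted ∈ P i)
  obtain ⟨f, hf, hfR⟩ : ∃ f : ι → Stage G, range f ∈ Stage.consistent G ∧ ∀ i, R i (f i) := by
    refine exists_range_mem_of_isOfFiniteCharacter Stage.isOfFiniteCharacter_consistent
      Stage.empty_mem_consistent R fun i g hg hgcons ↦ ?_
    have := (hIio i).to_subtype
    obtain ⟨v, hvA, hvP, hv⟩ := exists_insert_mem_consistent hl hsub (countable_range g) hgcons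
      (forall_mem_range.2 fun j ↦ hdouble j _ (hg j).2.2) (hIic i) (hP i)
    exact ⟨v, ⟨hvA, hvP⟩, hv⟩
  refine ⟨Stage.summands (range f), fun i ↦ ?_, fun i ↦ ⟨?_, ?_⟩⟩
  · exact Stage.countable_summands_range_sdiff (hIio i) fun j hij ↦
      ⟨mem_iInter₂.1 (hfR j).1.1 i hij, mem_iInter₂.1 (hfR j).1.2 i hij⟩
  · exact ⟨_, (hfR i).2.1, add_mem_add (Stage.left_mem_summands (mem_range_self i))
      (Stage.right_mem_summands (mem_range_self i))⟩
  · exact ⟨_, (hfR i).2.2,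
      disjoint_right.1 hf (mem_image_of_mem Stage.omitted (mem_range_self i))⟩

lemma not_countable_of_add_self_inter_nonempty {G : Type*} [Add G] [MeasurableSpace G]
    [MeasurableSingletonClass G] (hG : ¬ (univ : Set G).Countable) {S : Set G}
    (hS : ∀ P, MeasurableSet P → ¬ P.Countable → (P ∩ (S + S)).Nonempty) : ¬ S.Countable := by
  intro hScount
  have hSS : (S + S).Countable := hScount.image2 hScount _
  have hcompl : ¬ (S + S)ᶜ.Countable := fun h ↦ hG (union_compl_self (S + S) ▸ hSS.union h)
  simpa using hS _ hSS.measurableSet.compl hcompl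

lemma mk_measurableSet_le_continuum (α : Type*) [MeasurableSpace α]
    [h : MeasurableSpace.CountablyGenerated α] : #{s : Set α // MeasurableSet s} ≤ 𝔠 := by
  obtain ⟨b, hb, rfl⟩ := h.isCountablyGenerated
  exact MeasurableSpace.cardinal_measurableSet_le_continuum
    ((le_aleph0_iff_set_countable.2 hb).trans aleph0_le_continuum)

lemma mk_le_continuum_of_countablyGenerated (α : Type*) [MeasurableSpace α]
    [MeasurableSpace.CountablyGenerated α] [MeasurableSingletonClass α] : #α ≤ 𝔠 :=
  (mk_le_of_injective (f := fun x ↦ (⟨{x}, measurableSet_singleton x⟩ : {s // MeasurableSet s}))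
    fun _ _ h ↦ singleton_injective (congrArg Subtype.val h)).trans
    (mk_measurableSet_le_continuum α)

theorem exists_countable_sdiff_and_measurableSet_inter_add_self {G : Type u} [AddCommGroup G]
    [MeasurableSpace G] [MeasurableSpace.CountablyGenerated G] [MeasurableSingletonClass G]
    {l : Filter G} [CountableInterFilter l] [IsMeasurablyGenerated l] [NeBot l]
    (hCH : (𝔠 : Cardinal.{u}) = ℵ₁) (hl : l ≤ cofinite) (hsub : ∀ p : G, Tendsto (p - ·) l l)
    (hdouble : {d | ∃ᶠ x in l, x + x = d}.Countable) :
    ∃ S : Set G, #S = 𝔠 ∧ (∀ A ∈ l, (S \ A).Countable) ∧ ∀ P, MeasurableSet P → ¬ P.Countable →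
      (P ∩ (S + S)).Nonempty ∧ (P ∩ (S + S)ᶜ).Nonempty := by
  have hG := not_countable_univ_of_le_cofinite hl
  set D := {d | ∃ᶠ x in l, x + x = d}
  let ι := {A : Set G // MeasurableSet A ∧ A ∈ l} × {P : Set G // MeasurableSet P ∧ ¬ P.Countable}
  have hι : #ι ≤ ℵ₁ := by
    rw [mk_prod, lift_id, lift_id, ← hCH, ← continuum_mul_self]
    gcongr <;> exact (mk_subtype_mono fun _ h ↦ h.1).trans (mk_measurableSet_le_continuum G)
  obtain ⟨S, hSA, hSP⟩ := exists_countable_sdiff_and_add_self_inter hl hsub hι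
    (A := fun i ↦ i.1) (P := fun i ↦ i.2 \ D) (fun i ↦ i.1.2.2)
    (fun i h ↦ i.2.2.2 ((h.union hdouble).mono (subset_sdiff_union _ _)))
    fun i d hd ↦ not_frequently.1 hd.2
  have hbernstein (P : Set G) (hP : MeasurableSet P) (hPc : ¬ P.Countable) :
      (P ∩ (S + S)).Nonempty ∧ (P ∩ (S + S)ᶜ).Nonempty :=
    (hSP ⟨⟨univ, .univ, univ_mem⟩, ⟨P, hP, hPc⟩⟩).imp
      (.mono (inter_subset_inter_left _ sdiff_subset))
      (.mono (inter_subset_inter_left _ sdiff_subset))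
  have hS : ¬ S.Countable :=
    not_countable_of_add_self_inter_nonempty hG fun P hP hPc ↦ (hbernstein P hP hPc).1
  refine ⟨S, ?_, fun A hA ↦ ?_, hbernstein⟩
  · refine ((mk_set_le S).trans (mk_le_continuum_of_countablyGenerated G)).antisymm ?_
    rwa [hCH, aleph_one_le_iff, ← not_le, le_aleph0_iff_set_countable]
  · obtain ⟨B, hB, hBm, hBA⟩ := IsMeasurablyGenerated.exists_measurable_subset hA
    exact (hSA ⟨⟨B, hBm, hB⟩, ⟨univ, .univ, hG⟩⟩).mono (sdiff_subset_sdiff_right hBA)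

end AlmostAll

lemma not_countable_of_perfect {X : Type*} [TopologicalSpace X] [PolishSpace X] {P : Set X}
    (hP : Perfect P) (hne : P.Nonempty) : ¬ P.Countable := by
  let := TopologicalSpace.upgradeIsCompletelyMetrizable X
  obtain ⟨f, hfP, -, hf⟩ := hP.exists_nat_bool_injection hne
  intro hPc
  have hcantor : (univ : Set (ℕ → Bool)).Countable :=
    MapsTo.countable_of_injOn (fun x _ ↦ hfP (mem_range_self x)) hf.injOn hPc
  simpa [aleph0_lt_continuum.not_ge] using le_aleph0_iff_set_countable.2 hcantor

lemma continuum_eq_aleph_one_univ (hCH : (𝔠 : Cardinal.{u}) = ℵ₁) : (𝔠 : Cardinal.{v}) = ℵ₁ := by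
  rw [← lift_eq_aleph_one.{v, u}, lift_continuum, ← lift_continuum.{v, u}, hCH, lift_aleph,
    Ordinal.lift_one]

theorem stmt_16_general {G : Type*} [AddCommGroup G] [TopologicalSpace G] [PolishSpace G]
    [IsTopologicalAddGroup G] [MeasurableSpace G] [BorelSpace G] (μ : Measure G) [SFinite μ]
    [NeZero μ] [NullSingletonClass μ] [μ.IsAddLeftInvariant]
    (hCH : 𝔠 = ℵ₁) :
    ∃ S : Set G, (#S = 𝔠 ∧ ∀ N, μ N = 0 → (S ∩ N).Countable) ∧
      ∀ P, Perfect P → P.Nonempty → (P ∩ (S + S)).Nonempty ∧ (P ∩ (S + S)ᶜ).Nonempty := by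
  have hdouble : {d | ∃ᶠ x in ae μ, x + x = d}.Countable := by
    simpa only [frequently_ae_iff, pos_iff_ne_zero] using
      Measure.countable_meas_level_set_pos (g := fun x ↦ x + x) (by fun_prop)
  obtain ⟨S, hS, hSN, hSP⟩ := exists_countable_sdiff_and_measurableSet_inter_add_self
    (continuum_eq_aleph_one_univ hCH) (l := ae μ)
    (Filter.le_cofinite_iff_eventually_ne.2 fun x ↦ by simp [ae_iff])
    (fun p ↦ (quasiMeasurePreserving_sub_left μ p).tendsto_ae) hdouble
  refine ⟨S, ⟨hS, fun N hN ↦ ?_⟩, fun P hP hne ↦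
    hSP P hP.closed.measurableSet (not_countable_of_perfect hP hne)⟩
  simpa only [Set.sdiff_compl] using hSN Nᶜ (compl_mem_ae_iff.2 hN)

theorem stmt_16 (hCH : Cardinal.continuum = Cardinal.aleph 1) :
    ∃ S : Set ℝ, IsSierpinski S ∧ IsBernstein (S + S) :=
  stmt_16_general volume hCH
end
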